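/- Assume dom h has diameter at most D > 0 and M_f > 0. Set B := 8 + 12·log(1 + L_f²D²N̄/(16M_f²)) and U(ε̄) := 4(M_f² + ε̄L_f)B/(1−χ)² + N̄ε̄/λ₀. Then: (a) every stepsize λ used by U-PB (in particular every λ_k set at a serious update) satisfies λ ≥ min{ (1−χ)²N̄ε̄/(4(M_f² + ε̄L_f)B), λ₀ }, and hence λ ≥ N̄ε̄/U(ε̄); and (b) the total number of reset updates performed by U-PB is at most ⌈2·log(λ₀U(ε̄)/(N̄ε̄))⌉. -/

import Mathlib

open scoped RealInnerProductSpace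

/- Within a cycle of null updates the gaps decrease: strong convexity of the prox subproblem gives
`t (i + 1) + ‖x (i + 1) - x i‖² / (2λ) ≤ t i`, and `t (i + 1)` is at most the linearization error
of `f` from `x i` to `x (i + 1)`. Using each step alone leaves an extra logarithm that the constant
`8` of `B` does not absorb; two consecutive steps are better, because their subgradient jumps
cannot both be extremal. Along the potential `a / t - b log t` every pair of steps gains `2`, so a
cycle of `N̄` iterations above the tolerance forces `λ` to be large. Hence stepsizes are halved only
while they are large, which gives both claims. -/

section Analysis

open Filter

lemma apply_one_le_apply_zero_of_sub_le_mul_sq {g : ℝ → ℝ} {C : ℝ}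
    (hg : ∀ s t, 0 ≤ s → s ≤ t → t ≤ 1 → g t - g s ≤ C * (t - s) ^ 2) : g 1 ≤ g 0 := by
  have subdivision : ∀ n : ℕ, 0 < n → g 1 - g 0 ≤ C / n := by
    intro n hn
    have hn' : (0 : ℝ) < n := Nat.cast_pos.2 hn
    have increment : ∀ i ∈ Finset.range n,
        g ((i + 1 : ℕ) / n) - g ((i : ℕ) / n) ≤ C / n ^ 2 := by
      intro i hi
      have hi' : ((i + 1 : ℕ) : ℝ) ≤ n := Nat.cast_le.2 (Finset.mem_range.1 hi)
      refine (hg _ _ (by positivity) (by gcongr; simp) ((div_le_one hn').2 hi')).trans_eq ?_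
      push_cast
      field_simp
      ring
    calc g 1 - g 0 = ∑ i ∈ Finset.range n, (g ((i + 1 : ℕ) / n) - g ((i : ℕ) / n)) := by
          rw [Finset.sum_range_sub (fun i : ℕ => g (i / n)), div_self hn'.ne', Nat.cast_zero,
            zero_div]
      _ ≤ ∑ _i ∈ Finset.range n, C / (n : ℝ) ^ 2 := Finset.sum_le_sum increment
      _ = C / n := by
          rw [Finset.sum_const, Finset.card_range, nsmul_eq_mul]
          field_simp
  exact sub_nonpos.1 <| ge_of_tendsto (tendsto_const_div_atTop_nhds_zero_nat C) <|
    (eventually_gt_atTop 0).mono subdivision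

lemma log_le_div_sub_one_add_log {E z : ℝ} (hE : 0 < E) (hz : 0 < z) :
    Real.log z ≤ z / E - 1 + Real.log E := by
  have h := Real.log_le_sub_one_of_pos (div_pos hz hE)
  rw [Real.log_div hz.ne' hE.ne'] at h
  linarith

lemma log_eight_le : Real.log 8 ≤ 2.08 := by
  rw [show (8 : ℝ) = 2 ^ 3 by norm_num, Real.log_pow]
  norm_num
  linarith [Real.log_two_lt_d9]

lemma log_twelve_le : Real.log 12 ≤ 2.53 := by
  have h := log_le_div_sub_one_add_log (E := 2 ^ 4) (z := 12) (by norm_num) (by norm_num)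
  rw [Real.log_pow] at h
  norm_num at h ⊢
  linarith [Real.log_two_lt_d9]

lemma log_four_le : Real.log 4 ≤ 1.39 := by
  rw [show (4 : ℝ) = 2 ^ 2 by norm_num, Real.log_pow]
  norm_num
  linarith [Real.log_two_lt_d9]

lemma natCast_le_two_mul_log_of_two_pow_le {k : ℕ} {a : ℝ} (h : 2 ^ k ≤ a) :
    (k : ℝ) ≤ 2 * Real.log a := by
  have hlog := Real.log_le_log (by positivity) h
  rw [Real.log_pow] at hlog
  nlinarith [Real.log_two_gt_d9, (Nat.cast_nonneg k : (0 : ℝ) ≤ k)]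

lemma div_div_add_div_le_min {a b c : ℝ} (ha : 0 < a) (hb : 0 < b) (hc : 0 < c) :
    a / (a / b + a / c) ≤ min b c := by
  have hab : 0 < a / b := div_pos ha hb
  have hac : 0 < a / c := div_pos ha hc
  refine le_min ?_ ?_
  · calc a / (a / b + a / c) ≤ a / (a / b) := by gcongr; linarith
      _ = b := by field_simp
  · calc a / (a / b + a / c) ≤ a / (a / c) := by gcongr; linarith
      _ = c := by field_simp

end Analysis

section Convexity

open Filter Topology

variable {E : Type*} [NormedAddCommGroup E]

lemma add_le_of_uniformConvexOn_of_isMinOn [NormedSpace ℝ E] {S : Set E} {φ : ℝ → ℝ} {g : E → ℝ}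
    {x u : E} (hg : UniformConvexOn S φ g) (hmin : IsMinOn g S x) (hx : x ∈ S) (hu : u ∈ S) :
    g x + φ ‖x - u‖ ≤ g u := by
  have segment : ∀ θ ∈ Set.Ioo (0 : ℝ) 1, (1 - θ) * φ ‖x - u‖ ≤ g u - g x := by
    rintro θ ⟨hθ0, hθ1⟩
    have hθ : 0 ≤ 1 - θ := sub_nonneg.2 hθ1.le
    have hle := (hmin (hg.1 hx hu hθ hθ0.le (by ring))).trans (hg.2 hx hu hθ hθ0.le (by ring))
    simp only [smul_eq_mul] at hle
    exact le_of_mul_le_mul_left (by linarith) hθ0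
  have hlim : Tendsto (fun θ : ℝ => (1 - θ) * φ ‖x - u‖) (𝓝[>] 0) (𝓝 ((1 - 0) * φ ‖x - u‖)) :=
    Continuous.tendsto (by fun_prop) 0 |>.mono_left nhdsWithin_le_nhds
  have := le_of_tendsto hlim (eventually_of_mem (Ioo_mem_nhdsGT one_pos) segment)
  linarith

variable [InnerProductSpace ℝ E] {S : Set E}

lemma strongConvexOn_norm_sub_sq_div (hS : Convex ℝ S) (c : E) (lam : ℝ) :
    StrongConvexOn S (1 / lam) fun u => ‖u - c‖ ^ 2 / (2 * lam) := by
  rw [strongConvexOn_iff_convex]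
  have affine : (fun u => ‖u - c‖ ^ 2 / (2 * lam) - 1 / lam / 2 * ‖u‖ ^ 2)
      = fun u => (-lam⁻¹ • innerSL ℝ c).toLinearMap u + ‖c‖ ^ 2 / (2 * lam) := by
    funext u
    simp only [ContinuousLinearMap.coe_coe, smul_eq_mul, smul_apply,
      innerSL_apply_apply]
    rw [norm_sub_sq_real, real_inner_comm]
    ring
  rw [affine]
  exact ((-lam⁻¹ • innerSL ℝ c).toLinearMap.convexOn hS).add_const _

lemma prox_growth {g : E → ℝ} {c x u : E} {lam : ℝ} (hg : ConvexOn ℝ S g)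
    (hmin : IsMinOn (fun u => g u + ‖u - c‖ ^ 2 / (2 * lam)) S x) (hx : x ∈ S) (hu : u ∈ S) :
    g x + ‖x - c‖ ^ 2 / (2 * lam) + ‖u - x‖ ^ 2 / (2 * lam) ≤ g u + ‖u - c‖ ^ 2 / (2 * lam) := by
  have h := add_le_of_uniformConvexOn_of_isMinOn
    (hg.uniformConvexOn_zero.add (strongConvexOn_norm_sub_sq_div hg.1 c lam)) hmin hx hu
  simp only [Pi.add_apply, Pi.zero_apply, zero_add, norm_sub_rev x u] at h
  calc _ = g x + ‖x - c‖ ^ 2 / (2 * lam) + 1 / lam / 2 * ‖u - x‖ ^ 2 := by ring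
    _ ≤ _ := h

lemma inner_add_inner_sq_le (p q u v : E) :
    (⟪p, u⟫ + ⟪q, v⟫) ^ 2 ≤ (‖p‖ ^ 2 + ‖q‖ ^ 2) * (‖u‖ ^ 2 + ‖v‖ ^ 2) := by
  have habs : |⟪p, u⟫ + ⟪q, v⟫| ≤ ‖p‖ * ‖u‖ + ‖q‖ * ‖v‖ :=
    (abs_add_le _ _).trans (add_le_add (abs_real_inner_le_norm _ _) (abs_real_inner_le_norm _ _))
  calc (⟪p, u⟫ + ⟪q, v⟫) ^ 2 ≤ (‖p‖ * ‖u‖ + ‖q‖ * ‖v‖) ^ 2 :=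
        sq_le_sq' (abs_le.1 habs).1 (abs_le.1 habs).2
    _ ≤ _ := by nlinarith [sq_nonneg (‖p‖ * ‖v‖ - ‖q‖ * ‖u‖)]

end Convexity

section Oracle

variable {E : Type*} [NormedAddCommGroup E] [InnerProductSpace ℝ E]

/-- The error `f y - ℓ_f(y; x)` of the linearization of `f` at `x` given by the oracle `f'`. -/
def linearizationError (f : E → ℝ) (f' : E → E) (x y : E) : ℝ :=
  f y - f x - ⟪f' x, y - x⟫

/-- `f'` is a subgradient oracle for `f` on `S` satisfying the hybrid condition, which interpolates
between bounded variation (`L = 0`) and Lipschitz continuity (`M = 0`) of the subgradients. -/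
structure IsHybridOracle (f : E → ℝ) (f' : E → E) (S : Set E) (M L : ℝ) : Prop where
  add_inner_le : ∀ x ∈ S, ∀ u ∈ S, f x + ⟪f' x, u - x⟫ ≤ f u
  norm_sub_le : ∀ x ∈ S, ∀ y ∈ S, ‖f' x - f' y‖ ≤ 2 * M + L * ‖x - y‖

namespace IsHybridOracle

variable {f : E → ℝ} {f' : E → E} {S : Set E} {M L : ℝ} {x y z : E}

lemma linearizationError_le_inner (hf : IsHybridOracle f f' S M L) (hx : x ∈ S) (hy : y ∈ S) :
    linearizationError f f' x y ≤ ⟪f' y - f' x, y - x⟫ := by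
  have h := hf.add_inner_le y hy x hx
  rw [← neg_sub y x, inner_neg_right] at h
  rw [linearizationError, inner_sub_left]
  linarith

lemma linearizationError_le (hf : IsHybridOracle f f' S M L) (hS : Convex ℝ S) (hx : x ∈ S)
    (hy : y ∈ S) :
    linearizationError f f' x y ≤ 2 * M * ‖y - x‖ + L / 2 * ‖y - x‖ ^ 2 := by
  set d := y - x with hd
  set p : ℝ → E := fun s => x + s • d with hp
  have increment : ∀ s t, 0 ≤ s → s ≤ t → t ≤ 1 →
      f (p t) - f (p s) ≤ (t - s) * (⟪f' x, d⟫ + (2 * M + L * (t * ‖d‖)) * ‖d‖) := by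
    intro s t hs hst ht
    have hpS : ∀ r, 0 ≤ r → r ≤ 1 → p r ∈ S := fun r h0 h1 => hS.add_smul_sub_mem hx hy ⟨h0, h1⟩
    have hpt := hpS t (hs.trans hst) ht
    have hlow := hf.add_inner_le _ hpt _ (hpS s hs (hst.trans ht))
    have hback : p s - p t = -((t - s) • d) := by simp only [hp]; module
    rw [hback, inner_neg_right, inner_smul_right] at hlow
    have hnorm := hf.norm_sub_le _ hpt x hx
    rw [hp, add_sub_cancel_left, norm_smul, Real.norm_of_nonneg (hs.trans hst)] at hnorm
    have hslope : ⟪f' (p t), d⟫ ≤ ⟪f' x, d⟫ + (2 * M + L * (t * ‖d‖)) * ‖d‖ := by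
      have h := (real_inner_le_norm (f' (p t) - f' x) d).trans
        (mul_le_mul_of_nonneg_right hnorm (norm_nonneg d))
      rw [inner_sub_left] at h
      linarith
    linarith [mul_le_mul_of_nonneg_left hslope (sub_nonneg.2 hst)]
  have h := apply_one_le_apply_zero_of_sub_le_mul_sq (C := L * ‖d‖ ^ 2 / 2)
    (g := fun s => f (p s) - s * (⟪f' x, d⟫ + 2 * M * ‖d‖) - s ^ 2 * (L / 2 * ‖d‖ ^ 2))
    fun s t hs hst ht => by linarith [increment s t hs hst ht]
  simp only [hp, hd, one_smul, zero_smul, add_zero, add_sub_cancel] at h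
  rw [linearizationError]
  linarith

lemma two_mul_linearizationError_add_le_inner (hf : IsHybridOracle f f' S M L) (hx : x ∈ S)
    (hy : y ∈ S) (hz : z ∈ S) :
    2 * linearizationError f f' x y + linearizationError f f' y z
      ≤ ⟪(f' z - f' x) + (f' y - f' x), y - x⟫ + ⟪(f' z - f' x) - (f' y - f' x), z - y⟫ := by
  have hxy := hf.linearizationError_le_inner hx hy
  have hxz := hf.linearizationError_le_inner hx hz
  rw [← sub_add_sub_cancel' y x z] at hxz
  simp only [linearizationError, ← sub_add_sub_cancel' y x z, inner_add_left, inner_add_right,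
    inner_sub_left] at hxy hxz ⊢
  linarith

lemma two_mul_linearizationError_add_le (hf : IsHybridOracle f f' S M L) (hM : 0 ≤ M) (hL : 0 ≤ L)
    (hx : x ∈ S) (hy : y ∈ S) (hz : z ∈ S) {R : ℝ} (hR : 0 ≤ R)
    (hR2 : R ^ 2 = ‖y - x‖ ^ 2 + ‖z - y‖ ^ 2) :
    2 * linearizationError f f' x y + linearizationError f f' y z
      ≤ 4 * M * R + 7 / 3 * L * R ^ 2 := by
  refine (hf.two_mul_linearizationError_add_le_inner hx hy hz).trans ?_
  refine le_of_sq_le_sq ((inner_add_inner_sq_le _ _ _ _).trans ?_) (by positivity)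
  -- The jumps enter through their sum and difference, so the parallelogram law bounds both at
  -- once; adding two separate bounds would give a coefficient of `M * R` larger than `4`.
  have parallelogram := parallelogram_law_with_norm ℝ (f' z - f' x) (f' y - f' x)
  have hjump : ‖f' y - f' x‖ ^ 2 ≤ (2 * M + L * ‖y - x‖) ^ 2 := by
    gcongr; exact hf.norm_sub_le y hy x hx
  have hjump' : ‖f' z - f' x‖ ^ 2 ≤ (2 * M + L * (‖y - x‖ + ‖z - y‖)) ^ 2 := by
    gcongr
    refine (hf.norm_sub_le z hz x hx).trans ?_
    gcongr
    simpa only [sub_add_sub_cancel'] using norm_add_le (y - x) (z - y)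
  have hsum : 2 * (‖f' z - f' x‖ ^ 2 + ‖f' y - f' x‖ ^ 2) ≤ (4 * M + 7 / 3 * L * R) ^ 2 := by
    generalize ‖y - x‖ = r₁, ‖z - y‖ = r₂ at *
    have hlin : 2 * r₁ + r₂ ≤ 7 / 3 * R :=
      le_of_sq_le_sq (by nlinarith [sq_nonneg (r₁ - 2 * r₂)]) (by positivity)
    have hquad : r₁ ^ 2 + (r₁ + r₂) ^ 2 ≤ 49 / 18 * R ^ 2 := by
      nlinarith [sq_nonneg (13 * r₁ - 18 * r₂)]
    nlinarith [mul_le_mul_of_nonneg_left hlin (mul_nonneg hM hL),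
      mul_le_mul_of_nonneg_left hquad (sq_nonneg L)]
  calc _ ≤ (4 * M + 7 / 3 * L * R) ^ 2 * R ^ 2 := by rw [← hR2]; gcongr; linarith
    _ = _ := by ring

end IsHybridOracle

end Oracle

section Potential

/-- Potential of a positive gap `t` along a cycle of null updates: `a / t` accounts for the
nonsmooth part of the oracle (rate `1 / k`), `b * log t` for the smooth part (linear rate). -/
noncomputable def gapPotential (a b t : ℝ) : ℝ :=
  a / t - b * Real.log t

variable {a b κ ρ t₀ t₁ : ℝ}

lemma sub_mul_div_le_gapPotential_sub (hb : 0 ≤ b) (ht₁ : 0 < t₁) (ht₀ : 0 < t₀) :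
    (t₀ - t₁) * (a / t₁ + b) / t₀ ≤ gapPotential a b t₁ - gapPotential a b t₀ := by
  have hlog := Real.one_sub_inv_le_log_of_pos (div_pos ht₀ ht₁)
  rw [inv_div, Real.log_div ht₀.ne' ht₁.ne'] at hlog
  calc (t₀ - t₁) * (a / t₁ + b) / t₀ = a / t₁ - a / t₀ + b * (1 - t₁ / t₀) := by field_simp
    _ ≤ a / t₁ - a / t₀ + b * (Real.log t₀ - Real.log t₁) := by gcongr
    _ = gapPotential a b t₁ - gapPotential a b t₀ := by rw [gapPotential, gapPotential]; ring

lemma gapPotential_antitone (ha : 0 ≤ a) (hb : 0 ≤ b) (ht₁ : 0 < t₁) (h : t₁ ≤ t₀) :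
    gapPotential a b t₀ ≤ gapPotential a b t₁ := by
  have ht₀ := ht₁.trans_le h
  have := sub_mul_div_le_gapPotential_sub (a := a) hb ht₁ ht₀
  have : 0 ≤ (t₀ - t₁) * (a / t₁ + b) / t₀ :=
    div_nonneg (mul_nonneg (sub_nonneg.2 h) (by positivity)) ht₀.le
  linarith

lemma le_gapPotential_sub (ha : 0 ≤ a) (hκ : 0 ≤ κ) (hκb : κ ≤ b) (hρ : 0 ≤ ρ) (ht₁ : 0 < t₁)
    (hdec : t₁ + ρ ≤ t₀) (hgain : κ * t₁ ^ 2 ≤ (a + (b - κ) * t₁) * ρ) :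
    κ ≤ gapPotential a b t₁ - gapPotential a b t₀ := by
  have ht₀ : 0 < t₀ := by linarith
  refine le_trans ?_ (sub_mul_div_le_gapPotential_sub (hκ.trans hκb) ht₁ ht₀)
  have hrate : κ * t₁ ≤ (a / t₁ + (b - κ)) * ρ :=
    calc κ * t₁ = κ * t₁ ^ 2 / t₁ := by field_simp
      _ ≤ (a + (b - κ) * t₁) * ρ / t₁ := by gcongr
      _ = (a / t₁ + (b - κ)) * ρ := by field_simp
  have hcoeff : 0 ≤ a / t₁ + (b - κ) := add_nonneg (by positivity) (sub_nonneg.2 hκb)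
  have hstep := mul_le_mul_of_nonneg_left (by linarith : ρ ≤ t₀ - t₁) hcoeff
  rw [le_div_iff₀ ht₀]
  linarith

lemma gapPotential_sub_eq (ht₁ : 0 < t₁) (ht₀ : 0 < t₀) :
    gapPotential a b t₁ - gapPotential a b t₀
      = a / t₁ * (1 - (t₀ / t₁)⁻¹) + b * Real.log (t₀ / t₁) := by
  rw [gapPotential, gapPotential, Real.log_div ht₀.ne' ht₁.ne']
  field_simp
  ring

end Potential

section Numerics

variable {μ ν w x Λ N : ℝ}

lemma potentialDrop_le_of_le_quarter (hν : 0 ≤ ν) (hν4 : ν ≤ 1 / 4) (hΛ : 1 ≤ Λ)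
    (hsmooth : Λ * (1 - ν) ≤ 2 * μ) :
    10 / 9 + 64 / 9 * μ * (1 - Λ⁻¹) + (2 + 56 / 9 * ν) * Real.log Λ ≤ 8 * (μ + 2 * ν) := by
  have hΛ0 : 0 < Λ := one_pos.trans_le hΛ
  have tangent₈ := log_le_div_sub_one_add_log (E := 8) (by norm_num) hΛ0
  have tangent₁₂ := log_le_div_sub_one_add_log (E := 12) (by norm_num) hΛ0
  have hμ : (1 - ν) / 2 ≤ μ * Λ⁻¹ := by
    rw [← div_eq_mul_inv, le_div_iff₀ hΛ0]; linarith
  -- After eliminating `μ` the claim is affine in `ν`: interpolate between `ν = 0` and `ν = 1 / 4`.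
  have at_zero : 18 * Real.log Λ ≤ 4 * Λ + 22 := by linarith [log_eight_le]
  have at_quarter : 32 * Real.log Λ ≤ 3 * Λ + 50 := by linarith [log_twelve_le]
  have interpolate₀ := mul_le_mul_of_nonneg_left at_zero (by linarith : 0 ≤ 1 - 4 * ν)
  have interpolate₁ := mul_le_mul_of_nonneg_left at_quarter (by linarith : 0 ≤ 4 * ν)
  linarith

lemma two_thirds_mul_min_le_log {v : ℝ} (hv : 0 ≤ v) :
    2 / 3 * min v 1 ≤ Real.log (1 + v) := by
  have hmin : 0 ≤ min v 1 := le_min hv zero_le_one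
  calc 2 / 3 * min v 1 ≤ 2 * min v 1 / (min v 1 + 2) := by
        rw [le_div_iff₀ (by linarith)]; nlinarith [min_le_right v 1]
    _ ≤ Real.log (1 + min v 1) := Real.le_log_one_add_of_nonneg hmin
    _ ≤ Real.log (1 + v) := Real.log_le_log (by linarith) (by linarith [min_le_left v 1])

lemma sixteen_mul_log_le (hx : 0 < x) (hw : 0 < w) :
    16 * Real.log (x * (2 * w + w ^ 2 / 2))
      ≤ 13 + x + 27 / 2 * (x + 2) * Real.log (1 + w ^ 2 * (x + 2) / 8) := by
  set v := w ^ 2 * (x + 2) / 8 with hv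
  have hv0 : 0 < v := by positivity
  have hlog := two_thirds_mul_min_le_log hv0.le
  rcases le_total v 1 with hv1 | hv1
  · have tangent₄ := log_le_div_sub_one_add_log (E := 4) (z := x * (2 * w + w ^ 2 / 2))
      (by norm_num) (by positivity)
    have quadratic : 8 * x * w + 2 * x * w ^ 2 ≤ 6.76 + x + 9 / 8 * (x + 2) ^ 2 * w ^ 2 := by
      have hlead : 0 < 9 / 8 * (x + 2) ^ 2 - 2 * x := by nlinarith
      have hdiscrim : (4 * x) ^ 2 ≤ (9 / 8 * (x + 2) ^ 2 - 2 * x) * (6.76 + x) := by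
        nlinarith [mul_nonneg hx.le (sq_nonneg (x - 5 / 2))]
      refine sub_nonneg.1 (nonneg_of_mul_nonneg_right (b := _) ?_ hlead)
      linarith [sq_nonneg ((9 / 8 * (x + 2) ^ 2 - 2 * x) * w - 4 * x)]
    rw [min_eq_left hv1] at hlog
    have hcoeff := mul_le_mul_of_nonneg_left hlog (by positivity : 0 ≤ 27 / 2 * (x + 2))
    have hv' : 27 / 2 * (x + 2) * (2 / 3 * v) = 9 / 8 * (x + 2) ^ 2 * w ^ 2 := by rw [hv]; ring
    linarith [log_four_le]
  · have hz : x * (2 * w + w ^ 2 / 2) ≤ 5 * x * (1 + v) := by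
      have : 2 * w + w ^ 2 / 2 ≤ 5 * (1 + v) := by
        rw [hv]; nlinarith [sq_nonneg (w - 1), mul_pos hx (pow_pos hw 2)]
      nlinarith
    have hsplit : Real.log (x * (2 * w + w ^ 2 / 2)) ≤ Real.log (5 * x) + Real.log (1 + v) := by
      rw [← Real.log_mul (by positivity) (by positivity)]
      exact Real.log_le_log (by positivity) hz
    have tangent₈ := log_le_div_sub_one_add_log (E := 8) (z := 5 * x) (by norm_num) (by positivity)
    rw [min_eq_right hv1] at hlog
    have hcoeff := mul_le_mul_of_nonneg_left hlog (by positivity : 0 ≤ 27 / 2 * x + 11)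
    linarith [log_eight_le]

lemma potentialDrop_le_of_quarter_le (hμ : 0 < μ) (hν4 : 1 / 4 ≤ ν) (hw : 0 < w) (hΛ : 1 ≤ Λ)
    (hdiam : ν * Λ ≤ μ * (2 * w + w ^ 2 / 2)) (hN : 8 * (μ + 2 * ν) ≤ N) :
    10 / 9 + 64 / 9 * μ * (1 - Λ⁻¹) + (2 + 56 / 9 * ν) * Real.log Λ
      ≤ (8 + 12 * Real.log (1 + w ^ 2 * N / 16)) * (μ + 2 * ν) := by
  have hν : 0 < ν := by linarith
  obtain ⟨x, rfl⟩ : ∃ x, μ = x * ν := ⟨μ / ν, by field_simp⟩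
  have hx : 0 < x := pos_of_mul_pos_left hμ hν.le
  have hlogΛ0 : 0 ≤ Real.log Λ := Real.log_nonneg hΛ
  have hΛx : Λ ≤ x * (2 * w + w ^ 2 / 2) := le_of_mul_le_mul_left (by linarith) hν
  have hlogΛ := Real.log_le_log (by linarith) hΛx
  have hlogN : Real.log (1 + w ^ 2 * (x + 2) / 8) ≤ Real.log (1 + w ^ 2 * N / 16) := by
    have : 2 * (x + 2) ≤ N := by nlinarith
    exact Real.log_le_log (by positivity) (by nlinarith [sq_nonneg w])
  have hcore : 16 * Real.log Λ ≤ 13 + x + 27 / 2 * (x + 2) * Real.log (1 + w ^ 2 * N / 16) := by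
    linarith [sixteen_mul_log_le hx hw, mul_le_mul_of_nonneg_left hlogN
      (by positivity : 0 ≤ 27 / 2 * (x + 2))]
  have hΛinv : 0 ≤ x * ν * Λ⁻¹ := by positivity
  have hconst : 10 / 9 + 2 * Real.log Λ ≤ 4 * ν * (10 / 9 + 2 * Real.log Λ) := by nlinarith
  linarith [mul_le_mul_of_nonneg_left hcore hν.le]

lemma potentialDrop_le (hμ : 0 < μ) (hν : 0 ≤ ν) (hw : 0 ≤ w) (hΛ : 1 ≤ Λ)
    (hsmooth : Λ * (1 - ν) ≤ 2 * μ) (hdiam : ν * Λ ≤ μ * (2 * w + w ^ 2 / 2))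
    (hN : 8 * (μ + 2 * ν) ≤ N) :
    10 / 9 + 64 / 9 * μ * (1 - Λ⁻¹) + (2 + 56 / 9 * ν) * Real.log Λ
      ≤ (8 + 12 * Real.log (1 + w ^ 2 * N / 16)) * (μ + 2 * ν) := by
  rcases le_total ν (1 / 4) with hν4 | hν4
  · refine (potentialDrop_le_of_le_quarter hν hν4 hΛ hsmooth).trans ?_
    have hN0 : 0 ≤ N := hN.trans' (by positivity)
    have : 0 ≤ Real.log (1 + w ^ 2 * N / 16) :=
      Real.log_nonneg (le_add_of_nonneg_right (by positivity))
    gcongr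
    linarith
  · have hw0 : w ≠ 0 := by
      rintro rfl
      nlinarith
    exact potentialDrop_le_of_quarter_le hμ hν4 (hw.lt_of_ne' hw0) hΛ hdiam hN

end Numerics

section NullCycle

variable {E : Type*} [NormedAddCommGroup E] [InnerProductSpace ℝ E]

/-- A cycle of null updates around the prox-center `c`: points `X 0, …, X n` and gaps
`t 0, …, t n`. The quadratic coefficient is `1 / (2 * lam)`, where `lam` is the stepsize of
the method divided by `1 - χ`; in this normalization `χ` disappears from the analysis. -/
structure IsNullCycle (f : E → ℝ) (f' : E → E) (S : Set E) (lam : ℝ) (c : E) (X : ℕ → E)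
    (t : ℕ → ℝ) (n : ℕ) : Prop where
  center_mem : c ∈ S
  mem : ∀ i, X i ∈ S
  gap_zero_le : t 0 ≤ linearizationError f f' c (X 0) - ‖X 0 - c‖ ^ 2 / (2 * lam)
  gap_decrease : ∀ i < n, t (i + 1) + ‖X (i + 1) - X i‖ ^ 2 / (2 * lam) ≤ t i
  gap_le : ∀ i < n, t (i + 1) ≤ linearizationError f f' (X i) (X (i + 1))

namespace IsNullCycle

variable {f : E → ℝ} {f' : E → E} {S : Set E} {M L lam : ℝ} {c : E} {X : ℕ → E} {t : ℕ → ℝ}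
  {n k : ℕ}

lemma potential_gain_one (hC : IsNullCycle f f' S lam c X t n) (hS : Convex ℝ S)
    (hf : IsHybridOracle f f' S M L) (hlam : 0 < lam) (hL : 0 ≤ L) (hk : k + 1 ≤ n)
    (htk : 0 < t (k + 1)) :
    8 / 9 ≤ gapPotential (64 / 9 * (lam * M ^ 2)) (2 + 56 / 9 * (lam * L)) (t (k + 1))
      - gapPotential (64 / 9 * (lam * M ^ 2)) (2 + 56 / 9 * (lam * L)) (t k) := by
  refine le_gapPotential_sub (by positivity) (by norm_num) ?_ (by positivity) htk
    (hC.gap_decrease k hk) ?_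
  · linarith [mul_nonneg hlam.le hL]
  · have hgap := (hC.gap_le k hk).trans (hf.linearizationError_le hS (hC.mem k) (hC.mem (k + 1)))
    generalize ‖X (k + 1) - X k‖ = r, t (k + 1) = τ at *
    have hquad : 8 / 9 * τ ^ 2 ≤ (32 / 9 * M ^ 2 + 28 / 9 * L * τ) * r ^ 2 := by
      nlinarith [sq_nonneg (2 * M * r - τ), mul_nonneg hL (mul_nonneg htk.le (sq_nonneg r))]
    calc 8 / 9 * τ ^ 2 ≤ _ := hquad
      _ = (64 / 9 * (lam * M ^ 2) + 56 / 9 * (lam * L) * τ) * (r ^ 2 / (2 * lam)) := by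
        field_simp; ring
      _ ≤ _ := by gcongr; linarith

lemma potential_gain_two (hC : IsNullCycle f f' S lam c X t n)
    (hf : IsHybridOracle f f' S M L) (hlam : 0 < lam) (hM : 0 ≤ M) (hL : 0 ≤ L) (hk : k + 2 ≤ n)
    (htk : 0 < t (k + 2)) :
    2 ≤ gapPotential (64 / 9 * (lam * M ^ 2)) (2 + 56 / 9 * (lam * L)) (t (k + 2))
      - gapPotential (64 / 9 * (lam * M ^ 2)) (2 + 56 / 9 * (lam * L)) (t k) := by
  set r₁ := ‖X (k + 1) - X k‖
  set r₂ := ‖X (k + 2) - X (k + 1)‖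
  set R := √(r₁ ^ 2 + r₂ ^ 2)
  have hR : R ^ 2 = r₁ ^ 2 + r₂ ^ 2 := Real.sq_sqrt (by positivity)
  have hdec₁ : t (k + 1) + r₁ ^ 2 / (2 * lam) ≤ t k := hC.gap_decrease k (by omega)
  have hdec₂ : t (k + 2) + r₂ ^ 2 / (2 * lam) ≤ t (k + 1) := hC.gap_decrease (k + 1) (by omega)
  refine le_gapPotential_sub (ρ := R ^ 2 / (2 * lam)) (by positivity) (by norm_num)
    (by linarith [mul_nonneg hlam.le hL]) (by positivity) htk (by rw [hR, add_div]; linarith) ?_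
  have hgap : 3 * t (k + 2) ≤ 4 * M * R + 7 / 3 * L * R ^ 2 := by
    have : 0 ≤ r₂ ^ 2 / (2 * lam) := by positivity
    linarith [hC.gap_le k (by omega), hC.gap_le (k + 1) (by omega),
      hf.two_mul_linearizationError_add_le hM hL (hC.mem k) (hC.mem (k + 1)) (hC.mem (k + 2))
        (Real.sqrt_nonneg _) hR]
  generalize t (k + 2) = τ at *
  have hquad : 2 * τ ^ 2 ≤ (32 / 9 * M ^ 2 + 28 / 9 * L * τ) * R ^ 2 := by
    nlinarith [sq_nonneg (4 * M * R - 3 * τ)]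
  calc 2 * τ ^ 2 ≤ _ := hquad
    _ = (64 / 9 * (lam * M ^ 2) + (2 + 56 / 9 * (lam * L) - 2) * τ) * (R ^ 2 / (2 * lam)) := by
      field_simp; ring

lemma natCast_sub_le_potential_gain (hC : IsNullCycle f f' S lam c X t n) (hS : Convex ℝ S)
    (hf : IsHybridOracle f f' S M L) (hlam : 0 < lam) (hM : 0 ≤ M) (hL : 0 ≤ L)
    (ht : ∀ i ≤ n, 0 < t i) (hk : k ≤ n) :
    (k : ℝ) - 1 / 9 ≤ gapPotential (64 / 9 * (lam * M ^ 2)) (2 + 56 / 9 * (lam * L)) (t k)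
      - gapPotential (64 / 9 * (lam * M ^ 2)) (2 + 56 / 9 * (lam * L)) (t 0) := by
  induction k using Nat.twoStepInduction with
  | zero => norm_num
  | one =>
    have := hC.potential_gain_one hS hf hlam hL hk (ht 1 hk)
    norm_num at this ⊢
    exact this
  | more k ih _ =>
    have := hC.potential_gain_two hf hlam hM hL hk (ht (k + 2) hk)
    push_cast
    linarith [ih (by omega)]

lemma gap_zero_mul_le (hC : IsNullCycle f f' S lam c X t n) (hS : Convex ℝ S)
    (hf : IsHybridOracle f f' S M L) (hlam : 0 < lam) (ht : 0 ≤ t 0) :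
    t 0 * (1 - lam * L) ≤ 2 * (lam * M ^ 2) := by
  have hgap := hC.gap_zero_le.trans
    (sub_le_sub_right (hf.linearizationError_le hS hC.center_mem (hC.mem 0)) _)
  generalize ‖X 0 - c‖ = r at *
  rcases le_total (1 - lam * L) 0 with hL1 | hL1
  · exact (mul_nonpos_of_nonneg_of_nonpos ht hL1).trans (by positivity)
  · have hgap' : 2 * lam * t 0 ≤ 4 * (lam * M) * r - (1 - lam * L) * r ^ 2 := by
      calc 2 * lam * t 0 ≤ 2 * lam * (2 * M * r + L / 2 * r ^ 2 - r ^ 2 / (2 * lam)) := by gcongr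
        _ = _ := by field_simp; ring
    refine le_of_mul_le_mul_left (a := 2 * lam) ?_ (by positivity)
    linarith [mul_le_mul_of_nonneg_right hgap' hL1, sq_nonneg ((1 - lam * L) * r - 2 * (lam * M))]

lemma gap_zero_le_of_norm_sub_le (hC : IsNullCycle f f' S lam c X t n) (hS : Convex ℝ S)
    (hf : IsHybridOracle f f' S M L) (hlam : 0 ≤ lam) (hM : 0 ≤ M) (hL : 0 ≤ L) {D : ℝ}
    (hD : ‖X 0 - c‖ ≤ D) :
    t 0 ≤ 2 * M * D + L / 2 * D ^ 2 :=
  calc t 0 ≤ linearizationError f f' c (X 0) :=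
        hC.gap_zero_le.trans (sub_le_self _ (by positivity))
    _ ≤ 2 * M * ‖X 0 - c‖ + L / 2 * ‖X 0 - c‖ ^ 2 :=
        hf.linearizationError_le hS hC.center_mem (hC.mem 0)
    _ ≤ 2 * M * D + L / 2 * D ^ 2 := by gcongr

lemma natCast_length_le (hC : IsNullCycle f f' S lam c X t n) (hS : Convex ℝ S)
    (hf : IsHybridOracle f f' S M L) (hlam : 0 < lam) (hM : 0 ≤ M) (hL : 0 ≤ L) {δ : ℝ}
    (hδ : 0 < δ) (ht : ∀ i ≤ n, δ ≤ t i) :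
    ((n + 1 : ℕ) : ℝ) ≤ 10 / 9 + 64 / 9 * (lam * M ^ 2 / δ) * (1 - (t 0 / δ)⁻¹)
      + (2 + 56 / 9 * (lam * L)) * Real.log (t 0 / δ) := by
  have htel := hC.natCast_sub_le_potential_gain hS hf hlam hM hL
    (fun i hi => hδ.trans_le (ht i hi)) le_rfl
  have hend := gapPotential_antitone (a := 64 / 9 * (lam * M ^ 2))
    (b := 2 + 56 / 9 * (lam * L)) (by positivity) (by positivity) hδ (ht n le_rfl)
  have hdrop := gapPotential_sub_eq (a := 64 / 9 * (lam * M ^ 2))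
    (b := 2 + 56 / 9 * (lam * L)) hδ (hδ.trans_le (ht 0 n.zero_le))
  rw [mul_div_assoc] at hdrop
  rw [Nat.cast_succ]
  linarith

lemma length_mul_le (hC : IsNullCycle f f' S lam c X t n) (hS : Convex ℝ S)
    (hf : IsHybridOracle f f' S M L) (hlam : 0 < lam) (hM : 0 < M) (hL : 0 ≤ L) {D δ : ℝ}
    (hD : ‖X 0 - c‖ ≤ D) (hδ : 0 < δ) (ht : ∀ i ≤ n, δ ≤ t i) :
    ((n + 1 : ℕ) : ℝ) * δ ≤ lam * (M ^ 2 + 2 * δ * L) *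
      (8 + 12 * Real.log (1 + L ^ 2 * D ^ 2 * (n + 1 : ℕ) / (16 * M ^ 2))) := by
  set N : ℝ := ((n + 1 : ℕ) : ℝ)
  have hD0 : 0 ≤ D := (norm_nonneg _).trans hD
  have ht0 : 0 < t 0 := hδ.trans_le (ht 0 n.zero_le)
  have hcount := hC.natCast_length_le hS hf hlam hM.le hL hδ ht
  have hsmooth : t 0 / δ * (1 - lam * L) ≤ 2 * (lam * M ^ 2 / δ) := by
    rw [div_mul_eq_mul_div, ← mul_div_assoc]
    exact div_le_div_of_nonneg_right (hC.gap_zero_mul_le hS hf hlam ht0.le) hδ.le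
  have hdiam : lam * L * (t 0 / δ)
      ≤ lam * M ^ 2 / δ * (2 * (L * D / M) + (L * D / M) ^ 2 / 2) := by
    calc _ ≤ lam * L * ((2 * M * D + L / 2 * D ^ 2) / δ) := by
          gcongr; exact hC.gap_zero_le_of_norm_sub_le hS hf hlam.le hM.le hL hD
      _ = _ := by field_simp
  have hlog : L ^ 2 * D ^ 2 * N / (16 * M ^ 2) = (L * D / M) ^ 2 * N / 16 := by field_simp
  have hlog0 : 0 ≤ Real.log (1 + L ^ 2 * D ^ 2 * N / (16 * M ^ 2)) :=
    Real.log_nonneg (le_add_of_nonneg_right (by positivity))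
  have hscale : lam * (M ^ 2 + 2 * δ * L) = (lam * M ^ 2 / δ + 2 * (lam * L)) * δ := by
    field_simp
  rw [hscale, mul_right_comm, mul_comm (_ + _) (8 + _)]
  refine mul_le_mul_of_nonneg_right ?_ hδ.le
  by_contra! hshort
  refine hshort.not_ge (hcount.trans ?_)
  rw [hlog]
  refine potentialDrop_le (by positivity) (by positivity) (by positivity)
    ((one_le_div hδ).2 (ht 0 n.zero_le)) hsmooth hdiam (hshort.le.trans' ?_)
  gcongr
  linarith

end IsNullCycle

end NullCycle

section Run

variable {E : Type*} [NormedAddCommGroup E] [InnerProductSpace ℝ E]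

/-- A run of U-PB with domain `S`, gap tolerance `δ` and cycle length `Nbar`, as the sequence of
its inner iterations, without the stopping test. `N j` counts the iterations
of the current cycle before `j`, so it is the counter of the method before its increment. The
prox-center that follows a reset or serious update may be any point of `S`. -/
structure UPBRun (f h : E → ℝ) (f' : E → E) (S : Set E) (χ lam0 δ : ℝ) (Nbar : ℕ) where
  model : ℕ → E → ℝ
  x : ℕ → E
  c : ℕ → E
  lam : ℕ → ℝ
  N : ℕ → ℕ
  φb : ℕ → ℝ
  t : ℕ → ℝ
  lam_zero : lam 0 = lam0
  N_zero : N 0 = 0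
  x_mem : ∀ j, x j ∈ S
  c_mem : ∀ j, c j ∈ S
  φb_of_N_eq_zero : ∀ j, N j = 0 →
    φb j = f (x j) + h (x j) + χ / (2 * lam j) * ‖x j - c j‖ ^ 2
  φb_succ : ∀ j, N (j + 1) ≠ 0 → φb (j + 1) = min (φb j)
    (f (x (j + 1)) + h (x (j + 1)) + χ / (2 * lam (j + 1)) * ‖x (j + 1) - c (j + 1)‖ ^ 2)
  t_eq : ∀ j, t j = φb j - (model j (x j) + h (x j) + ‖x j - c j‖ ^ 2 / (2 * lam j))
  linearization_le_model : ∀ j, N j = 0 → ∀ u ∈ S, f (c j) + ⟪f' (c j), u - c j⟫ ≤ model j u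
  null_update : ∀ j, δ < t j → N j + 1 < Nbar →
    c (j + 1) = c j ∧ lam (j + 1) = lam j ∧ N (j + 1) = N j + 1 ∧
    ∃ g : E → ℝ, ConvexOn ℝ S g ∧ g (x j) = model j (x j) ∧
      IsMinOn (fun u => g u + h u + ‖u - c j‖ ^ 2 / (2 * lam j)) S (x j) ∧
      (∀ u ∈ S, g u ≤ model (j + 1) u) ∧
      ∀ u ∈ S, f (x j) + ⟪f' (x j), u - x j⟫ ≤ model (j + 1) u
  reset_update : ∀ j, δ < t j → N j + 1 = Nbar → lam (j + 1) = lam j / 2 ∧ N (j + 1) = 0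
  serious_update : ∀ j, t j ≤ δ → lam (j + 1) = lam j ∧ N (j + 1) = 0

namespace UPBRun

variable {f h : E → ℝ} {f' : E → E} {S : Set E} {χ lam0 δ : ℝ} {Nbar : ℕ}
  (R : UPBRun f h f' S χ lam0 δ Nbar) {j : ℕ}

/-- Iteration `j` ends with a null update. -/
def IsNull (j : ℕ) : Prop :=
  δ < R.t j ∧ R.N j + 1 < Nbar

/-- Iteration `j` ends with a reset update. -/
def IsReset (j : ℕ) : Prop :=
  δ < R.t j ∧ R.N j + 1 = Nbar

lemma N_lt (hNbar : 0 < Nbar) (j : ℕ) : R.N j < Nbar := by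
  induction j with
  | zero => rwa [R.N_zero]
  | succ j ih =>
    rcases le_or_gt (R.t j) δ with ht | ht
    · rwa [(R.serious_update j ht).2]
    · rcases (Nat.succ_le_of_lt ih).lt_or_eq with hN | hN
      · rwa [(R.null_update j ht hN).2.2.1]
      · rwa [(R.reset_update j ht hN).2]

lemma isNull_or_isReset (hNbar : 0 < Nbar) (ht : δ < R.t j) : R.IsNull j ∨ R.IsReset j :=
  (Nat.succ_le_of_lt (R.N_lt hNbar j)).lt_or_eq.imp (⟨ht, ·⟩) (⟨ht, ·⟩)

lemma N_succ_of_not_isNull (hNbar : 0 < Nbar) (hj : ¬R.IsNull j) : R.N (j + 1) = 0 := by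
  rcases le_or_gt (R.t j) δ with ht | ht
  · exact (R.serious_update j ht).2
  · have hreset := (R.isNull_or_isReset hNbar ht).resolve_left hj
    exact (R.reset_update j ht hreset.2).2

lemma lam_succ_of_not_isReset (hNbar : 0 < Nbar) (hj : ¬R.IsReset j) :
    R.lam (j + 1) = R.lam j := by
  rcases le_or_gt (R.t j) δ with ht | ht
  · exact (R.serious_update j ht).1
  · have hnull := (R.isNull_or_isReset hNbar ht).resolve_right hj
    exact (R.null_update j ht hnull.2).2.1

open Classical in
lemma lam_eq_div_two_pow_count (hNbar : 0 < Nbar) (j : ℕ) :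
    R.lam j = lam0 / 2 ^ Nat.count R.IsReset j := by
  induction j with
  | zero => rw [R.lam_zero, Nat.count_zero, pow_zero, div_one]
  | succ j ih =>
    rw [Nat.count_succ]
    split_ifs with hj
    · rw [(R.reset_update j hj.1 hj.2).1, ih, div_div, pow_succ]
    · rw [R.lam_succ_of_not_isReset hNbar hj, ih, add_zero]

lemma lam_pos (hNbar : 0 < Nbar) (hlam0 : 0 < lam0) (j : ℕ) : 0 < R.lam j := by
  classical
  rw [R.lam_eq_div_two_pow_count hNbar]
  positivity

lemma exists_cycle_start (hNbar : 0 < Nbar) (j : ℕ) :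
    ∃ s, s + R.N j = j ∧ R.N s = 0 ∧ ∀ i < R.N j, R.IsNull (s + i) := by
  induction j with
  | zero => exact ⟨0, by rw [R.N_zero], R.N_zero, by simp [R.N_zero]⟩
  | succ j ih =>
    by_cases hj : R.IsNull j
    · obtain ⟨s, hs, hs0, hnull⟩ := ih
      rw [(R.null_update j hj.1 hj.2).2.2.1]
      refine ⟨s, by omega, hs0, fun i hi => ?_⟩
      rcases Nat.lt_succ_iff_lt_or_eq.1 hi with hi | rfl
      · exact hnull i hi
      · rwa [hs]
    · have hN := R.N_succ_of_not_isNull hNbar hj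
      exact ⟨j + 1, by rw [hN, add_zero], hN, by simp [hN]⟩

lemma const_of_isNull {s n : ℕ} (hnull : ∀ i < n, R.IsNull (s + i)) {i : ℕ} (hi : i ≤ n) :
    R.c (s + i) = R.c s ∧ R.lam (s + i) = R.lam s := by
  induction i with
  | zero => exact ⟨rfl, rfl⟩
  | succ i ih =>
    obtain ⟨hc, hlam, -⟩ := R.null_update (s + i) (hnull i hi).1 (hnull i hi).2
    have ⟨hci, hlami⟩ := ih (Nat.le_of_succ_le hi)
    exact ⟨hc.trans hci, hlam.trans hlami⟩

lemma t_le_of_N_eq_zero (hj : R.N j = 0) :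
    R.t j ≤ linearizationError f f' (R.c j) (R.x j)
      - ‖R.x j - R.c j‖ ^ 2 / (2 * (R.lam j / (1 - χ))) := by
  have hmodel := R.linearization_le_model j hj _ (R.x_mem j)
  calc R.t j ≤ linearizationError f f' (R.c j) (R.x j)
          - (1 - χ) * (‖R.x j - R.c j‖ ^ 2 / (2 * R.lam j)) := by
        rw [R.t_eq, R.φb_of_N_eq_zero j hj, linearizationError, div_mul_eq_mul_div, mul_div_assoc]
        linarith
    _ = _ := by rw [← mul_div_assoc 2, div_div_eq_mul_div, mul_comm (1 - χ), mul_div_right_comm]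

lemma t_succ_add_le (hh : ConvexOn ℝ S h) (hj : R.IsNull j) :
    R.t (j + 1) + ‖R.x (j + 1) - R.x j‖ ^ 2 / (2 * R.lam j) ≤ R.t j := by
  obtain ⟨hc, hlam, hN, g, hg, hgx, hmin, hgmodel, -⟩ := R.null_update j hj.1 hj.2
  have hgrowth := prox_growth (hg.add hh) hmin (R.x_mem j) (R.x_mem (j + 1))
  simp only [Pi.add_apply, hgx] at hgrowth
  have hφb : R.φb (j + 1) ≤ R.φb j :=
    (R.φb_succ j (by rw [hN]; exact Nat.succ_ne_zero _)).trans_le (min_le_left _ _)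
  rw [R.t_eq, R.t_eq, hc, hlam]
  linarith [hgmodel _ (R.x_mem (j + 1))]

lemma t_succ_le_linearizationError (hχ : χ ≤ 1) (hlam : 0 ≤ R.lam j) (hj : R.IsNull j) :
    R.t (j + 1) ≤ linearizationError f f' (R.x j) (R.x (j + 1)) := by
  obtain ⟨hc, hlam', hN, _, -, -, -, -, hmodel⟩ := R.null_update j hj.1 hj.2
  have hφb := (R.φb_succ j (by rw [hN]; exact Nat.succ_ne_zero _)).trans_le (min_le_right _ _)
  have hχ' := mul_le_mul_of_nonneg_right hχ
    (by positivity : 0 ≤ ‖R.x (j + 1) - R.c j‖ ^ 2 / (2 * R.lam j))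
  rw [hc, hlam', div_mul_eq_mul_div, mul_div_assoc] at hφb
  rw [R.t_eq, hc, hlam', linearizationError]
  linarith [hmodel _ (R.x_mem (j + 1))]

lemma isNullCycle (hh : ConvexOn ℝ S h) (hχ0 : 0 ≤ χ) (hχ1 : χ < 1) (hNbar : 0 < Nbar)
    (hlam0 : 0 < lam0) {s n : ℕ} (hs : R.N s = 0) (hnull : ∀ i < n, R.IsNull (s + i)) :
    IsNullCycle f f' S (R.lam s / (1 - χ)) (R.c s) (fun i => R.x (s + i)) (fun i => R.t (s + i))
      n where
  center_mem := R.c_mem s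
  mem i := R.x_mem (s + i)
  gap_zero_le := R.t_le_of_N_eq_zero hs
  gap_decrease i hi := by
    have hlam := R.lam_pos hNbar hlam0 s
    have hχ : R.lam s ≤ R.lam s / (1 - χ) :=
      le_div_self hlam.le (sub_pos.2 hχ1) (sub_le_self 1 hχ0)
    calc _ ≤ R.t (s + i + 1) + ‖R.x (s + i + 1) - R.x (s + i)‖ ^ 2 / (2 * R.lam s) := by
          gcongr <;> rfl
      _ ≤ R.t (s + i) := by
          rw [← (R.const_of_isNull hnull hi.le).2]
          exact R.t_succ_add_le hh (hnull i hi)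
  gap_le i hi :=
    R.t_succ_le_linearizationError hχ1.le (R.lam_pos hNbar hlam0 _).le (hnull i hi)

lemma mul_le_lam_mul_of_isReset {M L D : ℝ} (hf : IsHybridOracle f f' S M L)
    (hh : ConvexOn ℝ S h) (hM : 0 < M) (hL : 0 ≤ L) (hD : ∀ a ∈ S, ∀ b ∈ S, ‖a - b‖ ≤ D)
    (hχ0 : 0 ≤ χ) (hχ1 : χ < 1) (hNbar : 0 < Nbar) (hlam0 : 0 < lam0) (hδ : 0 < δ)
    (hj : R.IsReset j) :
    Nbar * δ ≤ R.lam j / (1 - χ) * (M ^ 2 + 2 * δ * L) *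
      (8 + 12 * Real.log (1 + L ^ 2 * D ^ 2 * Nbar / (16 * M ^ 2))) := by
  obtain ⟨s, hs, hs0, hnull⟩ := R.exists_cycle_start hNbar j
  have hlam : R.lam j = R.lam s := by
    rw [← (R.const_of_isNull hnull le_rfl).2, hs]
  have hgap : ∀ i ≤ R.N j, δ ≤ R.t (s + i) := by
    intro i hi
    rcases hi.lt_or_eq with hi | rfl
    · exact (hnull i hi).1.le
    · rw [hs]
      exact hj.1.le
  have hbound := (R.isNullCycle hh hχ0 hχ1 hNbar hlam0 hs0 hnull).length_mul_le hh.1 hf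
    (div_pos (R.lam_pos hNbar hlam0 s) (sub_pos.2 hχ1)) hM hL (hD _ (R.x_mem _) _ (R.c_mem _))
    hδ hgap
  rwa [hj.2, ← hlam] at hbound

lemma two_mul_le_lam_of_isReset {M L D ε : ℝ} (R : UPBRun f h f' S χ lam0 ((1 - χ) * ε / 2) Nbar)
    (hf : IsHybridOracle f f' S M L) (hh : ConvexOn ℝ S h) (hM : 0 < M) (hL : 0 ≤ L)
    (hD : ∀ a ∈ S, ∀ b ∈ S, ‖a - b‖ ≤ D) (hχ0 : 0 ≤ χ) (hχ1 : χ < 1) (hNbar : 0 < Nbar)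
    (hlam0 : 0 < lam0) (hε : 0 < ε) {B : ℝ} (hB0 : 0 < B)
    (hB : B = 8 + 12 * Real.log (1 + L ^ 2 * D ^ 2 * Nbar / (16 * M ^ 2))) (hj : R.IsReset j) :
    2 * ((1 - χ) ^ 2 * Nbar * ε / (4 * (M ^ 2 + ε * L) * B)) ≤ R.lam j := by
  have hχ : 0 < 1 - χ := sub_pos.2 hχ1
  have hlam := R.lam_pos hNbar hlam0 j
  have hcoeff : 2 * ((1 - χ) * ε / 2) * L ≤ ε * L :=
    mul_le_mul_of_nonneg_right (by nlinarith) hL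
  have hbound : Nbar * ((1 - χ) * ε / 2) ≤ R.lam j / (1 - χ) * (M ^ 2 + ε * L) * B := by
    have := R.mul_le_lam_mul_of_isReset hf hh hM hL hD hχ0 hχ1 hNbar hlam0 (by positivity) hj
    rw [← hB] at this
    exact this.trans (by gcongr)
  rw [div_mul_eq_mul_div, div_mul_eq_mul_div, le_div_iff₀ hχ] at hbound
  rw [← mul_div_assoc, div_le_iff₀ (by positivity)]
  linarith

lemma min_le_lam (hNbar : 0 < Nbar) {b : ℝ} (hreset : ∀ j, R.IsReset j → 2 * b ≤ R.lam j)
    (j : ℕ) : min b lam0 ≤ R.lam j := by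
  induction j with
  | zero => exact (min_le_right _ _).trans_eq R.lam_zero.symm
  | succ j ih =>
    by_cases hj : R.IsReset j
    · rw [(R.reset_update j hj.1 hj.2).1]
      exact (min_le_left _ _).trans (by linarith [hreset j hj])
    · rwa [R.lam_succ_of_not_isReset hNbar hj]

lemma two_pow_card_mul_le (hNbar : 0 < Nbar) {ℓ : ℝ} (hℓ : 0 ≤ ℓ) (hlam : ∀ j, ℓ ≤ R.lam j)
    {T : Finset ℕ} (hT : ∀ j ∈ T, R.IsReset j) : 2 ^ T.card * ℓ ≤ lam0 := by
  classical
  obtain ⟨m, hm⟩ := T.exists_nat_subset_range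
  have hcard : T.card ≤ Nat.count R.IsReset m := by
    rw [Nat.count_eq_card_filter_range]
    exact Finset.card_le_card fun j hj => Finset.mem_filter.2 ⟨hm hj, hT j hj⟩
  have hm := hlam m
  rw [R.lam_eq_div_two_pow_count hNbar, le_div_iff₀' (by positivity)] at hm
  exact hm.trans' (by gcongr; norm_num)

end UPBRun

end Run

theorem upb_stepsize_and_reset_bounds_general
    {E : Type*} [NormedAddCommGroup E] [InnerProductSpace ℝ E] {f h : E → ℝ} {f' : E → E}
    {S : Set E} {M L D χ lam0 ε : ℝ} {Nbar : ℕ} (hf : IsHybridOracle f f' S M L)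
    (hh : ConvexOn ℝ S h) (hM : 0 < M) (hL : 0 ≤ L) (hD : ∀ a ∈ S, ∀ b ∈ S, ‖a - b‖ ≤ D)
    (hχ0 : 0 ≤ χ) (hχ1 : χ < 1) (hlam0 : 0 < lam0) (hε : 0 < ε) (hNbar : 1 ≤ Nbar)
    (R : UPBRun f h f' S χ lam0 ((1 - χ) * ε / 2) Nbar) (B U : ℝ)
    (hB : B = 8 + 12 * Real.log (1 + L ^ 2 * D ^ 2 * Nbar / (16 * M ^ 2)))
    (hU : U = 4 * (M ^ 2 + ε * L) * B / (1 - χ) ^ 2 + Nbar * ε / lam0) :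
    (∀ j, min ((1 - χ) ^ 2 * Nbar * ε / (4 * (M ^ 2 + ε * L) * B)) lam0 ≤ R.lam j ∧
      Nbar * ε / U ≤ R.lam j) ∧
    ∀ T : Finset ℕ, (∀ j ∈ T, R.IsReset j) →
      (T.card : ℝ) ≤ (⌈2 * Real.log (lam0 * U / (Nbar * ε))⌉ : ℝ) := by
  have hχ : 0 < 1 - χ := sub_pos.2 hχ1
  have : (0 : ℝ) < Nbar := Nat.cast_pos.2 hNbar
  have hB0 : 0 < B := by
    have := Real.log_nonneg (le_add_of_nonneg_right
      (by positivity : 0 ≤ L ^ 2 * D ^ 2 * Nbar / (16 * M ^ 2)))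
    rw [hB]
    positivity
  have hlower := R.min_le_lam hNbar fun j hj =>
    R.two_mul_le_lam_of_isReset hf hh hM hL hD hχ0 hχ1 hNbar hlam0 hε hB0 hB hj
  have hU0 : 0 < U := by rw [hU]; positivity
  have hU' : U = Nbar * ε / ((1 - χ) ^ 2 * Nbar * ε / (4 * (M ^ 2 + ε * L) * B))
      + Nbar * ε / lam0 := by
    rw [hU]; field_simp
  have hlower' : ∀ j, Nbar * ε / U ≤ R.lam j := by
    intro j
    rw [hU']
    exact (div_div_add_div_le_min (by positivity) (by positivity) hlam0).trans (hlower j)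
  refine ⟨fun j => ⟨hlower j, hlower' j⟩, fun T hT => ?_⟩
  refine (natCast_le_two_mul_log_of_two_pow_le ?_).trans (Int.le_ceil _)
  have hcard := R.two_pow_card_mul_le hNbar (by positivity) hlower' hT
  rw [le_div_iff₀ (by positivity)]
  rwa [← mul_div_assoc, div_le_iff₀ hU0] at hcard

/-- Proposition `lem1:U-PB`(b),(c): lower bound on all stepsizes used by
U-PB and upper bound on the total number of reset updates. The execution of U-PB is
modeled by the sequence of inner iterations `j = 0, 1, 2, …` as in the complexity theorem;
a reset update occurs at iteration `j` iff `t j > (1−χ)ε̄/2` and `N j + 1 = N̄`. -/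
theorem upb_stepsize_and_reset_bounds
    {n : ℕ} (f h : EuclideanSpace ℝ (Fin n) → ℝ)
    (domf domh : Set (EuclideanSpace ℝ (Fin n)))
    (f' : EuclideanSpace ℝ (Fin n) → EuclideanSpace ℝ (Fin n))
    (Mf Lf : ℝ) (hMf : 0 < Mf) (hLf : 0 ≤ Lf)
    (hsub : domh ⊆ domf)
    (hfconv : ConvexOn ℝ domf f) (hhconv : ConvexOn ℝ domh h)
    (hflsc : LowerSemicontinuousOn f domf) (hhlsc : LowerSemicontinuousOn h domh)
    (horacle : ∀ x ∈ domh, ∀ u ∈ domf, f x + ⟪f' x, u - x⟫ ≤ f u)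
    (hhybrid : ∀ x ∈ domh, ∀ y ∈ domh, ‖f' x - f' y‖ ≤ 2 * Mf + Lf * ‖x - y‖)
    (D : ℝ) (hD : 0 < D) (hdiam : ∀ a ∈ domh, ∀ b ∈ domh, ‖a - b‖ ≤ D)
    (Xstar : Set (EuclideanSpace ℝ (Fin n)))
    (hXstar : Xstar = {z | z ∈ domh ∧ ∀ u ∈ domh, f z + h z ≤ f u + h u})
    (hXne : Xstar.Nonempty)
    -- inputs of U-PB
    (x0 : EuclideanSpace ℝ (Fin n)) (hx0 : x0 ∈ domh)
    (χ lam0 ε : ℝ) (Nbar : ℕ)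
    (hχ0 : 0 ≤ χ) (hχ1 : χ < 1) (hlam0 : 0 < lam0) (hε : 0 < ε) (hNbar : 1 ≤ Nbar)
    -- the execution of U-PB
    (F : ℕ → EuclideanSpace ℝ (Fin n) → ℝ)
    (x c : ℕ → EuclideanSpace ℝ (Fin n))
    (lam : ℕ → ℝ) (N : ℕ → ℕ) (φb t : ℕ → ℝ)
    (hc0 : c 0 = x0) (hl0 : lam 0 = lam0) (hN0 : N 0 = 0)
    (hFconv : ∀ j, ConvexOn ℝ domf (F j))
    (hFle : ∀ j, ∀ u ∈ domf, F j u ≤ f u)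
    (hFlow : ∀ j, N j = 0 → ∀ u ∈ domf, f (c j) + ⟪f' (c j), u - c j⟫ ≤ F j u)
    (hcdom : ∀ j, c j ∈ domh) (hxdom : ∀ j, x j ∈ domh)
    (hxmin : ∀ j, ∀ u ∈ domh,
      F j (x j) + h (x j) + ‖x j - c j‖ ^ 2 / (2 * lam j)
        ≤ F j u + h u + ‖u - c j‖ ^ 2 / (2 * lam j))
    (hφb0 : ∀ j, N j = 0 →
      φb j = f (x j) + h (x j) + χ / (2 * lam j) * ‖x j - c j‖ ^ 2)
    (hφbrec : ∀ j, N j ≠ 0 →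
      φb j = min (φb (j - 1)) (f (x j) + h (x j) + χ / (2 * lam j) * ‖x j - c j‖ ^ 2))
    (ht : ∀ j, t j = φb j - (F j (x j) + h (x j) + ‖x j - c j‖ ^ 2 / (2 * lam j)))
    (hnull : ∀ j, (1 - χ) * ε / 2 < t j → N j + 1 < Nbar →
      c (j + 1) = c j ∧ lam (j + 1) = lam j ∧ N (j + 1) = N j + 1 ∧
      ∃ fbar : EuclideanSpace ℝ (Fin n) → ℝ,
        ConvexOn ℝ domf fbar ∧ (∀ u ∈ domf, fbar u ≤ f u) ∧
        fbar (x j) = F j (x j) ∧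
        (∀ u ∈ domh, fbar (x j) + h (x j) + ‖x j - c j‖ ^ 2 / (2 * lam j)
          ≤ fbar u + h u + ‖u - c j‖ ^ 2 / (2 * lam j)) ∧
        (∀ u ∈ domf, fbar u ≤ F (j + 1) u) ∧
        (∀ u ∈ domf, f (x j) + ⟪f' (x j), u - x j⟫ ≤ F (j + 1) u))
    (hreset : ∀ j, (1 - χ) * ε / 2 < t j → N j + 1 = Nbar →
      c (j + 1) = c j ∧ lam (j + 1) = lam j / 2 ∧ N (j + 1) = 0)
    (hserious : ∀ j, t j ≤ (1 - χ) * ε / 2 →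
      c (j + 1) = x j ∧ lam (j + 1) = lam j ∧ N (j + 1) = 0)
    (B U : ℝ)
    (hB : B = 8 + 12 * Real.log (1 + Lf ^ 2 * D ^ 2 * Nbar / (16 * Mf ^ 2)))
    (hU : U = 4 * (Mf ^ 2 + ε * Lf) * B / (1 - χ) ^ 2 + Nbar * ε / lam0) :
    (∀ j, min ((1 - χ) ^ 2 * Nbar * ε / (4 * (Mf ^ 2 + ε * Lf) * B)) lam0 ≤ lam j ∧
      Nbar * ε / U ≤ lam j) ∧
    (∀ S : Finset ℕ, (∀ j ∈ S, (1 - χ) * ε / 2 < t j ∧ N j + 1 = Nbar) →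
      (S.card : ℝ) ≤ (⌈2 * Real.log (lam0 * U / (Nbar * ε))⌉ : ℝ)) := by
  have hf : IsHybridOracle f f' domh Mf Lf :=
    ⟨fun x hx u hu => horacle x hx u (hsub hu), hhybrid⟩
  let R : UPBRun f h f' domh χ lam0 ((1 - χ) * ε / 2) Nbar :=
    { model := F, x, c, lam, N, φb, t
      lam_zero := hl0
      N_zero := hN0
      x_mem := hxdom
      c_mem := hcdom
      φb_of_N_eq_zero := hφb0
      φb_succ := fun j => hφbrec (j + 1)
      t_eq := ht
      linearization_le_model := fun j hj u hu => hFlow j hj u (hsub hu)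
      null_update := fun j hj hN => by
        obtain ⟨hc, hlam, hN', g, hg, -, hgx, hmin, hgF, hlinF⟩ := hnull j hj hN
        exact ⟨hc, hlam, hN', g, hg.subset hsub hhconv.1, hgx, isMinOn_iff.2 hmin,
          fun u hu => hgF u (hsub hu), fun u hu => hlinF u (hsub hu)⟩
      reset_update := fun j hj hN => (hreset j hj hN).2
      serious_update := fun j hj => (hserious j hj).2 }
  exact upb_stepsize_and_reset_bounds_general hf hhconv hMf hLf hdiam hχ0 hχ1 hlam0 hε hNbar R
    B U hB hU
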